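/- arXiv:1903.11802 — 2 statements merged into one kernel-verified Lean document; each statement's English description precedes it below -/
import Mathlib

section
/- In a non-symmetric operad, the circle product f ∘ g = Σ_{i=1}^m (-1)^{(i-1)(n-1)} f ∘_i g (for f ∈ O(m), g ∈ O(n)) satisfies the pre-Lie identity: (f ∘ g) ∘ h - f ∘ (g ∘ h) = (-1)^{(n-1)(p-1)} ((f ∘ h) ∘ g - f ∘ (h ∘ g)) for f ∈ O(m), g ∈ O(n), h ∈ O(p). -/
universe u v

/-- A collection of vector spaces `O(n)`, `n ≥ 1` (only positive arities are
used below). -/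
structure OperadSpace (K : Type u) [Field K] where
  O : ℕ → Type v
  grp : ∀ n, AddCommGroup (O n)
  mod : ∀ n, @Module K (O n) _ (grp n).toAddCommMonoid

attribute [instance] OperadSpace.grp OperadSpace.mod

/-- A non-symmetric operad in the category of vector spaces: partial
compositions `∘ᵢ : O(m) ⊗ O(n) → O(m+n-1)` (`1 ≤ i ≤ m`, here the middle
argument of `pcomp`), bilinear in each variable, with the two associativity
axioms and an identity element `id ∈ O(1)`. -/
structure NSOperad (K : Type u) [Field K] extends OperadSpace.{u, v} K where
  pcomp : ∀ {m n : ℕ}, O m → ℕ → O n → O (m + n - 1)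
  one : O 1
  pcomp_add_left : ∀ {m n : ℕ} (i : ℕ) (f f' : O m) (g : O n),
    pcomp (f + f') i g = pcomp f i g + pcomp f' i g
  pcomp_add_right : ∀ {m n : ℕ} (i : ℕ) (f : O m) (g g' : O n),
    pcomp f i (g + g') = pcomp f i g + pcomp f i g'
  pcomp_smul_left : ∀ {m n : ℕ} (c : K) (i : ℕ) (f : O m) (g : O n),
    pcomp (c • f) i g = c • pcomp f i g
  pcomp_smul_right : ∀ {m n : ℕ} (c : K) (i : ℕ) (f : O m) (g : O n),
    pcomp f i (c • g) = c • pcomp f i g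
  assoc1 : ∀ {m n p : ℕ} (f : O m) (g : O n) (h : O p) {i j : ℕ},
    1 ≤ i → i ≤ m → 1 ≤ j → j ≤ n →
    HEq (pcomp (pcomp f i g) (i + j - 1) h) (pcomp f i (pcomp g j h))
  assoc2 : ∀ {m n p : ℕ} (f : O m) (g : O n) (h : O p) {i j : ℕ},
    1 ≤ i → i < j → j ≤ m → 1 ≤ n →
    HEq (pcomp (pcomp f i g) (j + n - 1) h) (pcomp (pcomp f j h) i g)
  pcomp_one : ∀ {m : ℕ} (f : O m) (i : ℕ), 1 ≤ i → i ≤ m →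
    HEq (pcomp f i one) f
  one_pcomp : ∀ {m : ℕ} (f : O m), HEq (pcomp one 1 f) f

/-- The circle product `f ∘ g = Σ_{i=1}^{m} (-1)^{(i-1)(n-1)} f ∘ᵢ g`. -/
def NSOperad.circ {K : Type u} [Field K] (C : NSOperad.{u, v} K)
    {m n : ℕ} (f : C.O m) (g : C.O n) : C.O (m + n - 1) :=
  ∑ i ∈ Finset.Icc 1 m, ((-1 : ℤ) ^ ((i - 1) * (n - 1))) • C.pcomp f i g

/-! In `(f ∘ g) ∘ h` the operation `h` is plugged either into an input of `g`, or into an input of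
`f` to the right of `g`, or into one to the left. By the first associativity axiom the terms of
the first kind are exactly those of `f ∘ (g ∘ h)`. The terms of the second kind add up to the
brace `f{g, h}`, and by the second associativity axiom those of the third kind add up to
`(-1)^{(n-1)(p-1)} f{h, g}`. So the associator is
`f{g, h} + (-1)^{(n-1)(p-1)} f{h, g}`, and exchanging `g` and `h` multiplies it by that sign. -/

theorem sum_Icc_eq_sum_lt_add_sum_block_add_sum_gt {M : Type*} [AddCommMonoid M] (F : ℕ → M)
    {m n i : ℕ} (hi : 1 ≤ i) (him : i ≤ m) :
    ∑ k ∈ Finset.Icc 1 (m + n - 1), F k =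
      ∑ k ∈ Finset.Ico 1 i, F k + ∑ j ∈ Finset.Icc 1 n, F (i + j - 1) +
        ∑ j ∈ Finset.Ioc i m, F (j + n - 1) := by
  have block : ∑ j ∈ Finset.Icc 1 n, F (i + j - 1) = ∑ k ∈ Finset.Ico i (i + n), F k :=
    Finset.sum_nbij' (i + · - 1) (· + 1 - i) (by grind) (by grind) (by grind) (by grind)
      fun _ _ => rfl
  have gt : ∑ j ∈ Finset.Ioc i m, F (j + n - 1) = ∑ k ∈ Finset.Ico (i + n) (m + n), F k :=
    Finset.sum_nbij' (· + n - 1) (· + 1 - n) (by grind) (by grind) (by grind) (by grind)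
      fun _ _ => rfl
  have whole : Finset.Icc 1 (m + n - 1) = Finset.Ico 1 (m + n) := by grind
  rw [block, gt, whole, Finset.sum_Ico_consecutive _ hi (by omega),
    Finset.sum_Ico_consecutive _ (by omega) (by omega)]

namespace NSOperad

variable {K : Type u} [Field K] (C : NSOperad.{u, v} K) {m n p : ℕ}

/-- Transport along an equality of arities, as an additive equivalence, so that it commutes
with signed sums. -/
abbrev castArity {k l : ℕ} (e : k = l) : C.O k ≃+ C.O l :=
  AddEquiv.cast e

theorem castArity_castArity {k l r : ℕ} (e : k = l) (e' : l = r) (x : C.O k) :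
    C.castArity e' (C.castArity e x) = C.castArity (e.trans e') x := by
  subst e e'; rfl

theorem castArity_eq_of_heq {k l : ℕ} (e : k = l) {x : C.O k} {y : C.O l} (hxy : HEq x y) :
    C.castArity e x = y := by
  subst e; exact eq_of_heq hxy

/-- Partial composition at the input `i`, as a bilinear map. -/
def pcompₗ (m n i : ℕ) : C.O m →ₗ[K] C.O n →ₗ[K] C.O (m + n - 1) :=
  LinearMap.mk₂ K (fun f g => C.pcomp f i g) (C.pcomp_add_left i)
    (fun c => C.pcomp_smul_left c i) (C.pcomp_add_right i) (fun c => C.pcomp_smul_right c i)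

theorem pcomp_eq_pcompₗ (f : C.O m) (i : ℕ) (g : C.O n) :
    C.pcomp f i g = C.pcompₗ m n i f g := rfl

/-- The summand of `(f ∘ g) ∘ h` in which `g` is plugged into the input `i` of `f`, and `h` into
the input `k` of the result. -/
def circCircTerm (f : C.O m) (g : C.O n) (h : C.O p) (i k : ℕ) : C.O (m + n - 1 + p - 1) :=
  ((-1 : ℤ) ^ ((i - 1) * (n - 1) + (k - 1) * (p - 1))) • C.pcomp (C.pcomp f i g) k h

/-- The brace `f{g, h}`: the part of `(f ∘ g) ∘ h` in which `g` and `h` are plugged into distinct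
inputs `i < j` of `f`. Once `g` is plugged in, the input `j` of `f` has the number `j + n - 1`. -/
def brace (f : C.O m) (g : C.O n) (h : C.O p) : C.O (m + n - 1 + p - 1) :=
  ∑ i ∈ Finset.Icc 1 m, ∑ j ∈ Finset.Ioc i m, C.circCircTerm f g h i (j + n - 1)

theorem circ_circ_left (f : C.O m) (g : C.O n) (h : C.O p) :
    C.circ (C.circ f g) h =
      ∑ i ∈ Finset.Icc 1 m, ∑ k ∈ Finset.Icc 1 (m + n - 1), C.circCircTerm f g h i k := by
  rw [Finset.sum_comm]
  simp only [circ, circCircTerm, pcomp_eq_pcompₗ, map_sum, map_zsmul, LinearMap.sum_apply,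
    LinearMap.smul_apply, Finset.smul_sum, smul_smul, pow_add, mul_comm]

theorem circ_circ_right (f : C.O m) (g : C.O n) (h : C.O p) :
    C.circ f (C.circ g h) =
      ∑ i ∈ Finset.Icc 1 m, ∑ j ∈ Finset.Icc 1 n,
        ((-1 : ℤ) ^ ((i - 1) * (n + p - 1 - 1) + (j - 1) * (p - 1))) •
          C.pcomp f i (C.pcomp g j h) := by
  simp only [circ, pcomp_eq_pcompₗ, map_sum, map_zsmul, Finset.smul_sum, smul_smul, pow_add]

theorem castArity_zsmul_pcomp_pcomp (hp : 1 ≤ p) (f : C.O m) (g : C.O n) (h : C.O p)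
    {i j : ℕ} (hi : 1 ≤ i) (him : i ≤ m) (hj : 1 ≤ j) (hjn : j ≤ n) :
    C.castArity (by omega : m + (n + p - 1) - 1 = m + n - 1 + p - 1)
        (((-1 : ℤ) ^ ((i - 1) * (n + p - 1 - 1) + (j - 1) * (p - 1))) •
          C.pcomp f i (C.pcomp g j h)) =
      C.circCircTerm f g h i (i + j - 1) := by
  have exponent : (i - 1) * (n + p - 1 - 1) + (j - 1) * (p - 1) =
      (i - 1) * (n - 1) + (i + j - 1 - 1) * (p - 1) := by
    rw [show n + p - 1 - 1 = (n - 1) + (p - 1) by omega,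
      show i + j - 1 - 1 = (i - 1) + (j - 1) by omega]
    ring
  rw [map_zsmul, C.castArity_eq_of_heq _ (C.assoc1 f g h hi him hj hjn).symm, exponent,
    circCircTerm]

theorem castArity_circ_circ_right_eq_sum (hn : 1 ≤ n) (hp : 1 ≤ p)
    (f : C.O m) (g : C.O n) (h : C.O p) :
    C.castArity (by omega : m + (n + p - 1) - 1 = m + n - 1 + p - 1) (C.circ f (C.circ g h)) =
      ∑ i ∈ Finset.Icc 1 m, ∑ j ∈ Finset.Icc 1 n, C.circCircTerm f g h i (i + j - 1) := by
  simp only [circ_circ_right, map_sum]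
  refine Finset.sum_congr rfl fun i hi => Finset.sum_congr rfl fun j hj => ?_
  rw [Finset.mem_Icc] at hi hj
  exact C.castArity_zsmul_pcomp_pcomp hp f g h hi.1 hi.2 hj.1 hj.2

theorem zsmul_castArity_circCircTerm_swap (hp : 1 ≤ p) (f : C.O m) (g : C.O n) (h : C.O p)
    {i k : ℕ} (hk : 1 ≤ k) (hki : k < i) (him : i ≤ m) :
    ((-1 : ℤ) ^ ((n - 1) * (p - 1))) •
        C.castArity (by omega : m + p - 1 + n - 1 = m + n - 1 + p - 1)
          (C.circCircTerm f h g k (i + p - 1)) =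
      C.circCircTerm f g h i k := by
  have sign : (-1 : ℤ) ^ ((n - 1) * (p - 1) + ((k - 1) * (p - 1) + (i + p - 1 - 1) * (n - 1))) =
      (-1) ^ ((i - 1) * (n - 1) + (k - 1) * (p - 1)) := by
    rw [show i + p - 1 - 1 = (i - 1) + (p - 1) by omega]
    exact neg_one_pow_congr (by grind)
  rw [circCircTerm, map_zsmul, C.castArity_eq_of_heq _ (C.assoc2 f h g hk hki him hp),
    smul_smul, ← pow_add, sign, circCircTerm]

theorem zsmul_castArity_brace_eq_sum (hn : 1 ≤ n) (hp : 1 ≤ p)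
    (f : C.O m) (g : C.O n) (h : C.O p) :
    ((-1 : ℤ) ^ ((n - 1) * (p - 1))) •
        C.castArity (by omega : m + p - 1 + n - 1 = m + n - 1 + p - 1) (C.brace f h g) =
      ∑ i ∈ Finset.Icc 1 m, ∑ k ∈ Finset.Ico 1 i, C.circCircTerm f g h i k := by
  rw [Finset.sum_comm' (t' := Finset.Icc 1 m) (s' := fun k => Finset.Ioc k m) (by grind)]
  simp only [brace, map_sum, Finset.smul_sum]
  refine Finset.sum_congr rfl fun k hk => Finset.sum_congr rfl fun i hi => ?_
  rw [Finset.mem_Icc] at hk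
  rw [Finset.mem_Ioc] at hi
  exact C.zsmul_castArity_circCircTerm_swap hp f g h hk.1 hi.1 hi.2

theorem circ_associator_eq_brace_add_brace (hn : 1 ≤ n) (hp : 1 ≤ p)
    (f : C.O m) (g : C.O n) (h : C.O p) :
    C.circ (C.circ f g) h -
        C.castArity (by omega : m + (n + p - 1) - 1 = m + n - 1 + p - 1)
          (C.circ f (C.circ g h)) =
      C.brace f g h +
        ((-1 : ℤ) ^ ((n - 1) * (p - 1))) •
          C.castArity (by omega : m + p - 1 + n - 1 = m + n - 1 + p - 1) (C.brace f h g) := by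
  rw [sub_eq_iff_eq_add, circ_circ_left, C.zsmul_castArity_brace_eq_sum hn hp,
    C.castArity_circ_circ_right_eq_sum hn hp, brace,
    ← Finset.sum_add_distrib, ← Finset.sum_add_distrib]
  refine Finset.sum_congr rfl fun i hi => ?_
  rw [Finset.mem_Icc] at hi
  rw [sum_Icc_eq_sum_lt_add_sum_block_add_sum_gt _ hi.1 hi.2]
  abel

end NSOperad

/-- in a non-symmetric operad, the circle product satisfies the
pre-Lie identity
`(f ∘ g) ∘ h - f ∘ (g ∘ h) = (-1)^{(n-1)(p-1)} ((f ∘ h) ∘ g - f ∘ (h ∘ g))`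
for `f ∈ O(m)`, `g ∈ O(n)`, `h ∈ O(p)` (the `cast`s identify the equal
arities `m+n-1+p-1 = m+(n+p-1)-1 = ...`). -/
theorem circ_pre_lie {K : Type u} [Field K] (C : NSOperad.{u, v} K)
    {m n p : ℕ} (hm : 1 ≤ m) (hn : 1 ≤ n) (hp : 1 ≤ p)
    (f : C.O m) (g : C.O n) (h : C.O p) :
    C.circ (C.circ f g) h
      - cast (congrArg C.O (by omega : m + (n + p - 1) - 1 = m + n - 1 + p - 1))
          (C.circ f (C.circ g h))
      = ((-1 : ℤ) ^ ((n - 1) * (p - 1))) •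
        (cast (congrArg C.O (by omega : m + p - 1 + n - 1 = m + n - 1 + p - 1))
            (C.circ (C.circ f h) g)
          - cast (congrArg C.O (by omega : m + (p + n - 1) - 1 = m + n - 1 + p - 1))
              (C.circ f (C.circ h g))) := by
  have swapped := congrArg (C.castArity (by omega : m + p - 1 + n - 1 = m + n - 1 + p - 1))
    (C.circ_associator_eq_brace_add_brace hp hn f h g)
  simp only [map_sub, map_add, map_zsmul, C.castArity_castArity] at swapped
  have sign_sq : (-1 : ℤ) ^ ((n - 1) * (p - 1)) * (-1) ^ ((p - 1) * (n - 1)) = 1 := by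
    rw [mul_comm (p - 1), ← mul_pow, neg_one_mul, neg_neg, one_pow]
  calc
    _ = C.brace f g h + ((-1 : ℤ) ^ ((n - 1) * (p - 1))) • C.castArity _ (C.brace f h g) :=
      C.circ_associator_eq_brace_add_brace hn hp f g h
    _ = ((-1 : ℤ) ^ ((n - 1) * (p - 1))) •
          (C.castArity _ (C.brace f h g) +
            ((-1 : ℤ) ^ ((p - 1) * (n - 1))) • C.brace f g h) := by
      rw [smul_add, smul_smul, sign_sq, one_smul, add_comm (C.brace f g h)]
    _ = _ := congrArg _ swapped.symm
end

section
/- Strict 2-term Dend_∞-algebras (A_1 →^d A_0, μ_2, μ_3 = 0) are in one-to-one correspondence with crossed modules of dendriform algebras (A, B, dt, θ_1, θ_2). In particular, given a strict 2-term Dend_∞-algebra, A_0 is a dendriform algebra under μ_2, A_1 is a dendriform algebra under π_A([r]; m, n) := μ_2([r]; dm, n), d is a dendriform morphism, and the actions μ_2 of A_0 on A_1 satisfy the crossed-module identities. -/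
universe u

section

variable (K : Type u) [Field K] (A0 A1 : Type u)
  [AddCommGroup A0] [Module K A0] [AddCommGroup A1] [Module K A1]

/-- A 2-term `Dend_∞`-algebra on the chain complex `A1 → A0` (components as in
Definition 6.1: `x0, x1` are `μ₂` on `A0 ⊗ A0`, `l0, l1` on `A0 ⊗ A1`,
`r0, r1` on `A1 ⊗ A0`, and `s0, s1, s2` are the components of `μ₃`). -/
structure TwoTermDendInfty where
  d : A1 →ₗ[K] A0
  x0 : A0 →ₗ[K] A0 →ₗ[K] A0
  x1 : A0 →ₗ[K] A0 →ₗ[K] A0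
  l0 : A0 →ₗ[K] A1 →ₗ[K] A1
  l1 : A0 →ₗ[K] A1 →ₗ[K] A1
  r0 : A1 →ₗ[K] A0 →ₗ[K] A1
  r1 : A1 →ₗ[K] A0 →ₗ[K] A1
  s0 : A0 →ₗ[K] A0 →ₗ[K] A0 →ₗ[K] A1
  s1 : A0 →ₗ[K] A0 →ₗ[K] A0 →ₗ[K] A1
  s2 : A0 →ₗ[K] A0 →ₗ[K] A0 →ₗ[K] A1
  cii0 : ∀ a m, d (l0 a m) = x0 a (d m)
  cii1 : ∀ a m, d (l1 a m) = x1 a (d m)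
  ciii0 : ∀ m a, d (r0 m a) = x0 (d m) a
  ciii1 : ∀ m a, d (r1 m a) = x1 (d m) a
  civ0 : ∀ m n, l0 (d m) n = r0 m (d n)
  civ1 : ∀ m n, l1 (d m) n = r1 m (d n)
  cv0 : ∀ a b c, x0 (x0 a b) c - x0 a (x0 b c + x1 b c) = d (s0 a b c)
  cv1 : ∀ a b c, x0 (x1 a b) c - x1 a (x0 b c) = d (s1 a b c)
  cv2 : ∀ a b c, x1 (x0 a b + x1 a b) c - x1 a (x1 b c) = d (s2 a b c)
  cvi1_0 : ∀ a b m, l0 (x0 a b) m - l0 a (l0 b m + l1 b m) = s0 a b (d m)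
  cvi1_1 : ∀ a b m, l0 (x1 a b) m - l1 a (l0 b m) = s1 a b (d m)
  cvi1_2 : ∀ a b m, l1 (x0 a b + x1 a b) m - l1 a (l1 b m) = s2 a b (d m)
  cvi2_0 : ∀ a m c, r0 (l0 a m) c - l0 a (r0 m c + r1 m c) = s0 a (d m) c
  cvi2_1 : ∀ a m c, r0 (l1 a m) c - l1 a (r0 m c) = s1 a (d m) c
  cvi2_2 : ∀ a m c, r1 (l0 a m + l1 a m) c - l1 a (r1 m c) = s2 a (d m) c
  cvi3_0 : ∀ m b c, r0 (r0 m b) c - r0 m (x0 b c + x1 b c) = s0 (d m) b c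
  cvi3_1 : ∀ m b c, r0 (r1 m b) c - r1 m (x0 b c) = s1 (d m) b c
  cvi3_2 : ∀ m b c, r1 (r0 m b + r1 m b) c - r1 m (x1 b c) = s2 (d m) b c
  cvii0 : ∀ a b c e,
    s0 (x0 a b) c e - s0 a (x0 b c + x1 b c) e + s0 a b (x0 c e + x1 c e)
      = r0 (s0 a b c) e + l0 a (s0 b c e + s1 b c e + s2 b c e)
  cvii1 : ∀ a b c e,
    s0 (x1 a b) c e - s1 a (x0 b c) e + s1 a b (x0 c e + x1 c e)
      = r0 (s1 a b c) e + l1 a (s0 b c e)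
  cvii2 : ∀ a b c e,
    s1 (x0 a b + x1 a b) c e - s1 a (x1 b c) e + s2 a b (x0 c e)
      = r0 (s2 a b c) e + l1 a (s1 b c e)
  cvii3 : ∀ a b c e,
    s2 (x0 a b + x1 a b) c e - s2 a (x0 b c + x1 b c) e + s2 a b (x1 c e)
      = r1 (s0 a b c + s1 a b c + s2 a b c) e + l1 a (s2 b c e)

/-- A crossed module of dendriform algebras `(A, B, dt, θ₁, θ₂)`, with
`B = A0` (products `pb0, pb1`), `A = A1` (products `pa0, pa1`), a dendriform
morphism `dt : A → B`, and a representation `(t10, t11, t20, t21)` of `B` on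
`A`, satisfying the crossed-module identities. -/
structure DendCrossedModule where
  pb0 : A0 →ₗ[K] A0 →ₗ[K] A0
  pb1 : A0 →ₗ[K] A0 →ₗ[K] A0
  hb1 : ∀ a b c, pb0 (pb0 a b) c = pb0 a (pb0 b c + pb1 b c)
  hb2 : ∀ a b c, pb0 (pb1 a b) c = pb1 a (pb0 b c)
  hb3 : ∀ a b c, pb1 (pb0 a b + pb1 a b) c = pb1 a (pb1 b c)
  pa0 : A1 →ₗ[K] A1 →ₗ[K] A1
  pa1 : A1 →ₗ[K] A1 →ₗ[K] A1
  ha1 : ∀ m n q, pa0 (pa0 m n) q = pa0 m (pa0 n q + pa1 n q)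
  ha2 : ∀ m n q, pa0 (pa1 m n) q = pa1 m (pa0 n q)
  ha3 : ∀ m n q, pa1 (pa0 m n + pa1 m n) q = pa1 m (pa1 n q)
  dt : A1 →ₗ[K] A0
  dtMorph0 : ∀ m n, dt (pa0 m n) = pb0 (dt m) (dt n)
  dtMorph1 : ∀ m n, dt (pa1 m n) = pb1 (dt m) (dt n)
  t10 : A0 →ₗ[K] A1 →ₗ[K] A1
  t11 : A0 →ₗ[K] A1 →ₗ[K] A1
  t20 : A1 →ₗ[K] A0 →ₗ[K] A1
  t21 : A1 →ₗ[K] A0 →ₗ[K] A1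
  rep1 : ∀ a b m, t10 (pb0 a b) m = t10 a (t10 b m + t11 b m)
  rep2 : ∀ a b m, t10 (pb1 a b) m = t11 a (t10 b m)
  rep3 : ∀ a b m, t11 (pb0 a b + pb1 a b) m = t11 a (t11 b m)
  rep4 : ∀ a m c, t20 (t10 a m) c = t10 a (t20 m c + t21 m c)
  rep5 : ∀ a m c, t20 (t11 a m) c = t11 a (t20 m c)
  rep6 : ∀ a m c, t21 (t10 a m + t11 a m) c = t11 a (t21 m c)
  rep7 : ∀ m b c, t20 (t20 m b) c = t20 m (pb0 b c + pb1 b c)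
  rep8 : ∀ m b c, t20 (t21 m b) c = t21 m (pb0 b c)
  rep9 : ∀ m b c, t21 (t20 m b + t21 m b) c = t21 m (pb1 b c)
  cm1_0 : ∀ b m, dt (t10 b m) = pb0 b (dt m)
  cm1_1 : ∀ b m, dt (t11 b m) = pb1 b (dt m)
  cm2_0 : ∀ m b, dt (t20 m b) = pb0 (dt m) b
  cm2_1 : ∀ m b, dt (t21 m b) = pb1 (dt m) b
  cm3_0 : ∀ m n, t10 (dt m) n = pa0 m n
  cm3_1 : ∀ m n, t11 (dt m) n = pa1 m n
  cm4_0 : ∀ m n, t20 m (dt n) = pa0 m n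
  cm4_1 : ∀ m n, t21 m (dt n) = pa1 m n
  -- (θ₁ ∘₂ π_A)([s]; b, m, n) = (π_A ∘₁ θ₁)([s]; b, m, n):
  cm5_0 : ∀ b m n, t10 b (pa0 m n + pa1 m n) = pa0 (t10 b m) n
  cm5_1 : ∀ b m n, t11 b (pa0 m n) = pa0 (t11 b m) n
  cm5_2 : ∀ b m n, t11 b (pa1 m n) = pa1 (t10 b m + t11 b m) n
  -- (θ₂ ∘₁ π_A)([s]; m, n, b) = (π_A ∘₂ θ₂)([s]; m, n, b):
  cm6_0 : ∀ m n b, t20 (pa0 m n) b = pa0 m (t20 n b + t21 n b)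
  cm6_1 : ∀ m n b, t20 (pa1 m n) b = pa1 m (t20 n b)
  cm6_2 : ∀ m n b, t21 (pa0 m n + pa1 m n) b = pa1 m (t21 n b)

end

/-!
The dendriform relations, the representation axioms and the crossed-module identities
`θ₁ ∘₂ π_A = π_A ∘₁ θ₁` and `θ₂ ∘₁ π_A = π_A ∘₂ θ₂` are all instances of one three-term
associativity law between pairs of bilinear maps. For `μ₃ = 0` the homotopy relations say that this
law holds for the product of `A0` and its actions on `A1`. Since `π_A(m, n) = μ₂(d m, n)`, the laws
involving `π_A` arise from these by substituting `d` in the first or middle argument and using that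
`d` intertwines the left action with the product of `A0`. Hence in a crossed module `π_A` and its
relations are determined by the remaining data, which are exactly those of a strict algebra.
-/

/-- A pair of bilinear maps `X × Y → Z`, i.e. a linear map `R[C₂] ⊗ (X ⊗ Y) → Z`: the two halves
`≺` and `≻` of a product or action of dendriform type. The fields of `TwoTermDendInfty` and
`DendCrossedModule` mark them by the final digits `0` and `1`. -/
structure DendPairing (R X Y Z : Type*) [CommSemiring R] [AddCommMonoid X] [AddCommMonoid Y]
    [AddCommMonoid Z] [Module R X] [Module R Y] [Module R Z] where
  prec : X →ₗ[R] Y →ₗ[R] Z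
  succ : X →ₗ[R] Y →ₗ[R] Z

namespace DendPairing

section

variable {R X X' Y Y' Z U U' V W : Type*} [CommSemiring R]
  [AddCommMonoid X] [AddCommMonoid X'] [AddCommMonoid Y] [AddCommMonoid Y'] [AddCommMonoid Z]
  [AddCommMonoid U] [AddCommMonoid U'] [AddCommMonoid V] [AddCommMonoid W]
  [Module R X] [Module R X'] [Module R Y] [Module R Y'] [Module R Z]
  [Module R U] [Module R U'] [Module R V] [Module R W]

/-- Substitution of a linear map in the first argument of a pairing; it turns the left action into
the product `π_A`. -/
def compLeft (f : DendPairing R X Y Z) (φ : X' →ₗ[R] X) : DendPairing R X' Y Z where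
  prec := f.prec ∘ₗ φ
  succ := f.succ ∘ₗ φ

/-- The dendriform associativity law `g (f x y) z = k x (h y z)` for four pairings. Allowing four
different ones covers dendriform algebras (all equal), representations, and the crossed-module
identities at once. -/
structure Assoc (f : DendPairing R X Y U) (g : DendPairing R U Z W) (h : DendPairing R Y Z V)
    (k : DendPairing R X V W) : Prop where
  prec_prec : ∀ x y z, g.prec (f.prec x y) z = k.prec x (h.prec y z + h.succ y z)
  succ_prec : ∀ x y z, g.prec (f.succ x y) z = k.succ x (h.prec y z)
  succ_succ : ∀ x y z, g.succ (f.prec x y + f.succ x y) z = k.succ x (h.succ y z)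

variable {f : DendPairing R X Y U} {g : DendPairing R U Z W} {h : DendPairing R Y Z V}
  {k : DendPairing R X V W}

theorem Assoc.compLeft (H : Assoc f g h k) (φ : X' →ₗ[R] X) :
    Assoc (f.compLeft φ) g h (k.compLeft φ) where
  prec_prec x := H.prec_prec (φ x)
  succ_prec x := H.succ_prec (φ x)
  succ_succ x := H.succ_succ (φ x)

theorem Assoc.compMiddle (H : Assoc f g h k) (φ : Y' →ₗ[R] Y) (ψ : U' →ₗ[R] U)
    {f' : DendPairing R X Y' U'} (hprec : ∀ x y, ψ (f'.prec x y) = f.prec x (φ y))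
    (hsucc : ∀ x y, ψ (f'.succ x y) = f.succ x (φ y)) :
    Assoc f' (g.compLeft ψ) (h.compLeft φ) k where
  prec_prec x y z := (congrArg (g.prec · z) (hprec x y)).trans (H.prec_prec x (φ y) z)
  succ_prec x y z := (congrArg (g.prec · z) (hsucc x y)).trans (H.succ_prec x (φ y) z)
  succ_succ x y z := by
    have hsum : ψ (f'.prec x y + f'.succ x y) = f.prec x (φ y) + f.succ x (φ y) := by
      rw [map_add, hprec, hsucc]
    exact (congrArg (g.succ · z) hsum).trans (H.succ_succ x (φ y) z)

end

end DendPairing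

attribute [ext] TwoTermDendInfty DendCrossedModule

section

variable {K : Type u} [Field K] {A0 A1 : Type u}
  [AddCommGroup A0] [Module K A0] [AddCommGroup A1] [Module K A1]

namespace TwoTermDendInfty

/-- A 2-term `Dend_∞`-algebra is strict if its ternary operation `μ₃` vanishes. -/
def IsStrict (X : TwoTermDendInfty K A0 A1) : Prop :=
  X.s0 = 0 ∧ X.s1 = 0 ∧ X.s2 = 0

/-- The component `A0 ⊗ A0 → A0` of `μ₂`. -/
def baseMul (X : TwoTermDendInfty K A0 A1) : DendPairing K A0 A0 A0 where
  prec := X.x0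
  succ := X.x1

/-- The component `A0 ⊗ A1 → A1` of `μ₂`, which becomes `θ₁`. -/
def leftAct (X : TwoTermDendInfty K A0 A1) : DendPairing K A0 A1 A1 where
  prec := X.l0
  succ := X.l1

/-- The component `A1 ⊗ A0 → A1` of `μ₂`, which becomes `θ₂`. -/
def rightAct (X : TwoTermDendInfty K A0 A1) : DendPairing K A1 A0 A1 where
  prec := X.r0
  succ := X.r1

/-- The product `π_A(m, n) = μ₂(d m, n)` on `A1`. -/
def derivedMul (X : TwoTermDendInfty K A0 A1) : DendPairing K A1 A1 A1 :=
  X.leftAct.compLeft X.d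

variable {X : TwoTermDendInfty K A0 A1}

namespace IsStrict

theorem assoc_baseMul (hX : X.IsStrict) :
    X.baseMul.Assoc X.baseMul X.baseMul X.baseMul := by
  obtain ⟨h0, h1, h2⟩ := hX
  constructor <;> intro a b c <;> apply sub_eq_zero.mp
  · exact (X.cv0 a b c).trans (by simp [h0])
  · exact (X.cv1 a b c).trans (by simp [h1])
  · exact (X.cv2 a b c).trans (by simp [h2])

theorem assoc_baseMul_leftAct (hX : X.IsStrict) :
    X.baseMul.Assoc X.leftAct X.leftAct X.leftAct := by
  obtain ⟨h0, h1, h2⟩ := hX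
  constructor <;> intro a b m <;> apply sub_eq_zero.mp
  · exact (X.cvi1_0 a b m).trans (by simp [h0])
  · exact (X.cvi1_1 a b m).trans (by simp [h1])
  · exact (X.cvi1_2 a b m).trans (by simp [h2])

theorem assoc_leftAct_rightAct (hX : X.IsStrict) :
    X.leftAct.Assoc X.rightAct X.rightAct X.leftAct := by
  obtain ⟨h0, h1, h2⟩ := hX
  constructor <;> intro a m c <;> apply sub_eq_zero.mp
  · exact (X.cvi2_0 a m c).trans (by simp [h0])
  · exact (X.cvi2_1 a m c).trans (by simp [h1])
  · exact (X.cvi2_2 a m c).trans (by simp [h2])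

theorem assoc_rightAct_baseMul (hX : X.IsStrict) :
    X.rightAct.Assoc X.rightAct X.baseMul X.rightAct := by
  obtain ⟨h0, h1, h2⟩ := hX
  constructor <;> intro m b c <;> apply sub_eq_zero.mp
  · exact (X.cvi3_0 m b c).trans (by simp [h0])
  · exact (X.cvi3_1 m b c).trans (by simp [h1])
  · exact (X.cvi3_2 m b c).trans (by simp [h2])

theorem assoc_leftAct_derivedMul (hX : X.IsStrict) :
    X.leftAct.Assoc X.derivedMul X.derivedMul X.leftAct :=
  hX.assoc_baseMul_leftAct.compMiddle X.d X.d X.cii0 X.cii1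

theorem assoc_derivedMul (hX : X.IsStrict) :
    X.derivedMul.Assoc X.derivedMul X.derivedMul X.derivedMul :=
  hX.assoc_leftAct_derivedMul.compLeft X.d

theorem assoc_derivedMul_rightAct (hX : X.IsStrict) :
    X.derivedMul.Assoc X.rightAct X.rightAct X.derivedMul :=
  hX.assoc_leftAct_rightAct.compLeft X.d

end IsStrict

/-- The crossed module `(A1, A0, d, θ₁, θ₂)` of a strict 2-term `Dend_∞`-algebra, with the product
of `A0` and both actions given by `μ₂` and the product of `A1` by `derivedMul`. -/
def toCrossedModule (X : TwoTermDendInfty K A0 A1) (hX : X.IsStrict) :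
    DendCrossedModule K A0 A1 where
  pb0 := X.x0
  pb1 := X.x1
  hb1 := hX.assoc_baseMul.prec_prec
  hb2 := hX.assoc_baseMul.succ_prec
  hb3 := hX.assoc_baseMul.succ_succ
  pa0 := X.derivedMul.prec
  pa1 := X.derivedMul.succ
  ha1 := hX.assoc_derivedMul.prec_prec
  ha2 := hX.assoc_derivedMul.succ_prec
  ha3 := hX.assoc_derivedMul.succ_succ
  dt := X.d
  dtMorph0 m := X.cii0 (X.d m)
  dtMorph1 m := X.cii1 (X.d m)
  t10 := X.l0
  t11 := X.l1
  t20 := X.r0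
  t21 := X.r1
  rep1 := hX.assoc_baseMul_leftAct.prec_prec
  rep2 := hX.assoc_baseMul_leftAct.succ_prec
  rep3 := hX.assoc_baseMul_leftAct.succ_succ
  rep4 := hX.assoc_leftAct_rightAct.prec_prec
  rep5 := hX.assoc_leftAct_rightAct.succ_prec
  rep6 := hX.assoc_leftAct_rightAct.succ_succ
  rep7 := hX.assoc_rightAct_baseMul.prec_prec
  rep8 := hX.assoc_rightAct_baseMul.succ_prec
  rep9 := hX.assoc_rightAct_baseMul.succ_succ
  cm1_0 := X.cii0
  cm1_1 := X.cii1
  cm2_0 := X.ciii0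
  cm2_1 := X.ciii1
  cm3_0 _ _ := rfl
  cm3_1 _ _ := rfl
  cm4_0 m n := (X.civ0 m n).symm
  cm4_1 m n := (X.civ1 m n).symm
  cm5_0 b m n := (hX.assoc_leftAct_derivedMul.prec_prec b m n).symm
  cm5_1 b m n := (hX.assoc_leftAct_derivedMul.succ_prec b m n).symm
  cm5_2 b m n := (hX.assoc_leftAct_derivedMul.succ_succ b m n).symm
  cm6_0 := hX.assoc_derivedMul_rightAct.prec_prec
  cm6_1 := hX.assoc_derivedMul_rightAct.succ_prec
  cm6_2 := hX.assoc_derivedMul_rightAct.succ_succ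

end TwoTermDendInfty

namespace DendCrossedModule

/-- The 2-term `Dend_∞`-algebra of a crossed module: `μ₂` collects the product of `A0` and its two
actions, `μ₃` is zero, and the product of `A1` is forgotten. -/
def toTwoTermDendInfty (C : DendCrossedModule K A0 A1) : TwoTermDendInfty K A0 A1 where
  d := C.dt
  x0 := C.pb0
  x1 := C.pb1
  l0 := C.t10
  l1 := C.t11
  r0 := C.t20
  r1 := C.t21
  s0 := 0
  s1 := 0
  s2 := 0
  cii0 := C.cm1_0
  cii1 := C.cm1_1
  ciii0 := C.cm2_0
  ciii1 := C.cm2_1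
  civ0 m n := (C.cm3_0 m n).trans (C.cm4_0 m n).symm
  civ1 m n := (C.cm3_1 m n).trans (C.cm4_1 m n).symm
  cv0 a b c := (sub_eq_zero.mpr (C.hb1 a b c)).trans (map_zero C.dt).symm
  cv1 a b c := (sub_eq_zero.mpr (C.hb2 a b c)).trans (map_zero C.dt).symm
  cv2 a b c := (sub_eq_zero.mpr (C.hb3 a b c)).trans (map_zero C.dt).symm
  cvi1_0 a b m := sub_eq_zero.mpr (C.rep1 a b m)
  cvi1_1 a b m := sub_eq_zero.mpr (C.rep2 a b m)
  cvi1_2 a b m := sub_eq_zero.mpr (C.rep3 a b m)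
  cvi2_0 a m c := sub_eq_zero.mpr (C.rep4 a m c)
  cvi2_1 a m c := sub_eq_zero.mpr (C.rep5 a m c)
  cvi2_2 a m c := sub_eq_zero.mpr (C.rep6 a m c)
  cvi3_0 m b c := sub_eq_zero.mpr (C.rep7 m b c)
  cvi3_1 m b c := sub_eq_zero.mpr (C.rep8 m b c)
  cvi3_2 m b c := sub_eq_zero.mpr (C.rep9 m b c)
  cvii0 := by simp
  cvii1 := by simp
  cvii2 := by simp
  cvii3 := by simp

theorem isStrict_toTwoTermDendInfty (C : DendCrossedModule K A0 A1) :
    C.toTwoTermDendInfty.IsStrict :=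
  ⟨rfl, rfl, rfl⟩

theorem toCrossedModule_toTwoTermDendInfty (C : DendCrossedModule K A0 A1) :
    C.toTwoTermDendInfty.toCrossedModule C.isStrict_toTwoTermDendInfty = C := by
  have hprec : C.t10 ∘ₗ C.dt = C.pa0 := LinearMap.ext₂ C.cm3_0
  have hsucc : C.t11 ∘ₗ C.dt = C.pa1 := LinearMap.ext₂ C.cm3_1
  exact DendCrossedModule.ext rfl rfl hprec hsucc rfl rfl rfl rfl rfl

end DendCrossedModule

theorem TwoTermDendInfty.IsStrict.toTwoTermDendInfty_toCrossedModule
    {X : TwoTermDendInfty K A0 A1} (hX : X.IsStrict) :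
    (X.toCrossedModule hX).toTwoTermDendInfty = X :=
  TwoTermDendInfty.ext rfl rfl rfl rfl rfl rfl rfl hX.1.symm hX.2.1.symm hX.2.2.symm

end

/-- strict 2-term `Dend_∞`-algebras (`μ₃ = 0`) are in
one-to-one correspondence with crossed modules of dendriform algebras;
under the correspondence `A0` is a dendriform algebra under `μ₂`, `A1` is a
dendriform algebra under `π_A(m, n) = μ₂(dm, n)`, `d` is a dendriform
morphism, and the actions of `A0` on `A1` satisfy the crossed-module
identities. -/
theorem strict_classification
    {K : Type u} [Field K] {A0 A1 : Type u}
    [AddCommGroup A0] [Module K A0] [AddCommGroup A1] [Module K A1] :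
    Nonempty
      ({X : TwoTermDendInfty K A0 A1 // X.s0 = 0 ∧ X.s1 = 0 ∧ X.s2 = 0} ≃
        DendCrossedModule K A0 A1) := by
  exact Nonempty.intro
    { toFun X := X.1.toCrossedModule X.2
      invFun C := ⟨C.toTwoTermDendInfty, C.isStrict_toTwoTermDendInfty⟩
      left_inv X := Subtype.ext (TwoTermDendInfty.IsStrict.toTwoTermDendInfty_toCrossedModule X.2)
      right_inv C := C.toCrossedModule_toTwoTermDendInfty }
end
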